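/- arXiv:1907.10525 — 2 statements merged into one kernel-verified Lean document; each statement's English description precedes it below -/
import Mathlib

section
/- Let (A, I) be a henselian pair. For every finite projective A/I-module P there exists a finite projective A-module M together with an isomorphism of A/I-modules M/IM ≅ P. (This is the surjectivity, on isomorphism classes, of the base-change map M ↦ M ⊗_A A/I; together with the injectivity statement it says that base change induces a bijection on isomorphism classes of finite projective modules over A and over A/I.) -/
open TensorProduct

universe u v

/-!
`P` is the image of an idempotent matrix over `A ⧸ I`, so it suffices to lift idempotent matrices.
For a matrix `x` over `A` whose reduction is idempotent, Cayley–Hamilton gives a monic polynomial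
killing `x` that reduces to `X ^ n * (X - 1) ^ n`. A lift of this coprime factorization has Bézout
coefficients that turn `x` into an idempotent.

`HenselianRing` only lifts simple roots, and passing from there to coprime factorizations is the
main step. Coprime factorizations of `f` are the points of an étale `A`-algebra `S`, a localization
of a finite `A`-algebra `F`. Since `S` is unramified, an `A ⧸ I`-point of `S` is an open and closed
point of `Spec (F ⧸ I F)`, hence given by an idempotent of `F ⧸ I F`. A lift `θ ∈ F` of it
satisfies a monic equation reducing to `X ^ n * (X - 1)`. The root `1` is simple, so it lifts, and
splitting it off makes `θ` an idempotent `ε` of `F`. By Nakayama `F ⧸ (1 - ε)` is a quotient of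
`A`. It is étale over `A` with kernel inside the Jacobson radical, so it equals `A`, and
`S → F ⧸ (1 - ε) = A` is the lifted point.
-/

section Polynomial

open Polynomial

variable {A S B B' : Type*} [CommRing A]

theorem exists_isIdempotentElem_map_eq_of_isCoprime [CommRing S] [Algebra A S]
    [Ring B] [Algebra A B] [Ring B'] [Algebra A B'] [Algebra S B'] [IsScalarTower A S B']
    (φ : B →ₐ[A] B') {x : B} (hx : IsIdempotentElem (φ x))
    {g h : A[X]} (hgh : IsCoprime g h) (hroot : aeval x (g * h) = 0) {m n : ℕ}
    (hg : g.map (algebraMap A S) = X ^ (m + 1))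
    (hh : h.map (algebraMap A S) = (X - 1) ^ (n + 1)) :
    ∃ ε : B, IsIdempotentElem ε ∧ φ ε = φ x := by
  obtain ⟨a, b, hab⟩ := hgh
  have φ_aeval (p : A[X]) : φ (aeval x p) = aeval (φ x) (p.map (algebraMap A S)) := by
    rw [aeval_map_algebraMap, aeval_algHom_apply]
  have sum_eq_one : aeval x (a * g) + aeval x (b * h) = 1 := by
    rw [← map_add, hab, map_one]
  have mul_eq_zero : aeval x (a * g) * aeval x (b * h) = 0 := by
    rw [← map_mul, mul_mul_mul_comm, map_mul, hroot, mul_zero]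
  have absorb : φ x * φ (aeval x (a * g)) = φ (aeval x (a * g)) := by
    rw [φ_aeval, Polynomial.map_mul, hg, pow_succ', mul_left_comm, map_mul, aeval_X, ← mul_assoc,
      hx.eq]
  have annihilate : φ x * φ (aeval x (b * h)) = 0 := by
    rw [φ_aeval, Polynomial.map_mul, hh, pow_succ', mul_left_comm, map_mul, map_sub, aeval_X,
      map_one, ← mul_assoc, mul_sub, mul_one, hx.eq, sub_self, zero_mul]
  refine ⟨aeval x (a * g), ?_, ?_⟩
  · calc aeval x (a * g) * aeval x (a * g)
        = aeval x (a * g) * (aeval x (a * g) + aeval x (b * h)) := by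
          rw [mul_add, mul_eq_zero, add_zero]
      _ = aeval x (a * g) := by rw [sum_eq_one, mul_one]
  · calc φ (aeval x (a * g))
        = φ x * (φ (aeval x (a * g)) + φ (aeval x (b * h))) := by
          rw [mul_add, absorb, annihilate, add_zero]
      _ = φ x := by rw [← map_add, sum_eq_one, map_one, mul_one]

theorem isCoprime_X_sub_C_of_isUnit_eval {a : A} {q : A[X]} (h : IsUnit (q.eval a)) :
    IsCoprime q (X - C a) := by
  obtain ⟨v, hv⟩ := h.exists_left_inv
  obtain ⟨r, hr⟩ := X_sub_C_dvd_sub_C_eval (p := q) (a := a)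
  have hCv : C v * C (q.eval a) = 1 := by rw [← C_mul, hv, C_1]
  exact ⟨C v, -(C v * r), by linear_combination C v * hr + hCv⟩

theorem exists_eq_mul_of_map_eq_X_pow_mul_X_sub_one (I : Ideal A) [HenselianRing A I]
    {f : A[X]} (hf : f.Monic) {n : ℕ}
    (hfI : f.map (algebraMap A (A ⧸ I)) = X ^ n * (X - 1)) :
    ∃ g h : A[X], f = g * h ∧ IsCoprime g h ∧ g.map (algebraMap A (A ⧸ I)) = X ^ n ∧
      h.map (algebraMap A (A ⧸ I)) = X - 1 := by
  have eval_mk (p : A[X]) (a : A) :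
      Ideal.Quotient.mk I (p.eval a) =
        (p.map (algebraMap A (A ⧸ I))).eval (Ideal.Quotient.mk I a) := by
    rw [Ideal.Quotient.algebraMap_eq, eval_map, eval₂_at_apply]
  obtain ⟨a, ha, haI⟩ := HenselianRing.is_henselian (I := I) f hf 1
    (by rw [← Ideal.Quotient.eq_zero_iff_mem, eval_mk, hfI]; simp)
    (by rw [eval_mk, ← derivative_map, hfI]; simp)
  have ha_one : Ideal.Quotient.mk I a = 1 := by
    rw [← map_one (Ideal.Quotient.mk I)]; exact Ideal.Quotient.eq.mpr haI
  obtain ⟨q, rfl⟩ : X - C a ∣ f := dvd_iff_isRoot.mpr ha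
  have hlin : (X - C a).map (algebraMap A (A ⧸ I)) = X - 1 := by
    rw [Polynomial.map_sub, map_X, map_C, Ideal.Quotient.algebraMap_eq, ha_one, C_1]
  have hq : q.map (algebraMap A (A ⧸ I)) = X ^ n := by
    rw [Polynomial.map_mul, hlin, mul_comm] at hfI
    exact (monic_X_sub_C (1 : A ⧸ I)).isRegular.right (by simpa only [C_1] using hfI)
  have := isLocalHom_of_le_jacobson_bot I HenselianRing.jac
  have hqa : IsUnit (q.eval a) :=
    .of_map (Ideal.Quotient.mk I) _ (by rw [eval_mk, hq, ha_one]; simp)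
  exact ⟨q, X - C a, mul_comm _ _, isCoprime_X_sub_C_of_isUnit_eval hqa, hq, hlin⟩

theorem aeval_charpoly_eq_zero_of_represents {M ι : Type*} [AddCommGroup M] [Module A M]
    [Fintype ι] [DecidableEq ι] {b : ι → M} (hb : Submodule.span A (Set.range b) = ⊤)
    {N : Matrix ι ι A} {T : Module.End A M} (hN : N.Represents b T) :
    aeval T N.charpoly = 0 := by
  let N' : Matrix.isRepresentation A b := ⟨N, T, hN⟩
  have hN' : aeval N' N.charpoly = 0 :=
    Subtype.ext <| (aeval_subalgebra_coe N.charpoly _ N').trans N.aeval_self_charpoly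
  rw [← Matrix.isRepresentation.eq_toEnd_of_represents A b hb N' hN, aeval_algHom_apply, hN',
    map_zero]

theorem exists_monic_aeval_eq_zero_map_eq_prod {M ι : Type*} [AddCommGroup M] [Module A M]
    [Fintype ι] {b : ι → M} (hb : Submodule.span A (Set.range b) = ⊤) (I : Ideal A)
    (T : Module.End A M) (d : ι → A) (hT : ∀ i, T (b i) - d i • b i ∈ I • (⊤ : Submodule A M)) :
    ∃ χ : A[X], χ.Monic ∧ aeval T χ = 0 ∧
      χ.map (algebraMap A (A ⧸ I)) = ∏ i, (X - C (algebraMap A (A ⧸ I) (d i))) := by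
  classical
  simp only [← hb, Submodule.mem_ideal_smul_span_iff_exists_sum] at hT
  choose c hcI hc using hT
  let N : Matrix ι ι A := .diagonal d + .of fun i j ↦ c j i
  have hN : N.Represents b T := by
    refine Matrix.represents_iff'.mpr fun j ↦ ?_
    rw [eq_add_of_sub_eq' (hc j).symm, Finsupp.sum_fintype _ _ fun i ↦ zero_smul A (b i)]
    simp [N, add_smul, Finset.sum_add_distrib, Matrix.diagonal_apply, ite_smul]
  have hNI : N.map (algebraMap A (A ⧸ I)) = .diagonal fun i ↦ algebraMap A (A ⧸ I) (d i) := by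
    ext i j
    have hc_zero : Ideal.Quotient.mk I (c j i) = 0 := Ideal.Quotient.eq_zero_iff_mem.mpr (hcI j i)
    obtain rfl | hij := eq_or_ne i j <;> simp [N, *]
  exact ⟨N.charpoly, N.charpoly_monic, aeval_charpoly_eq_zero_of_represents hb hN, by
    rw [← Matrix.charpoly_map, hNI, Matrix.charpoly_diagonal]⟩

end Polynomial

section Etale

variable {R F S : Type*} [CommRing R] [CommRing F] [CommRing S] [Algebra R F] [Algebra R S]

theorem formallyEtale_comp_toAlgHom [Algebra F S] [IsScalarTower R F S]
    [Algebra.FormallyEtale F S] [Algebra.FormallyUnramified R S] (σ : S →ₐ[R] R) :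
    (σ.comp (IsScalarTower.toAlgHom R F S)).toRingHom.FormallyEtale := by
  algebraize [(σ : S →+* R), (σ.comp (IsScalarTower.toAlgHom R F S)).toRingHom]
  have : IsScalarTower F S R := .of_algebraMap_eq fun _ ↦ rfl
  have : IsScalarTower R S R := .of_algebraMap_eq fun r ↦ (σ.commutes r).symm
  have : Algebra.FormallyEtale S R := Algebra.FormallyEtale.of_restrictScalars (R := R)
  exact Algebra.FormallyEtale.comp F S R

theorem formallyEtale_of_scalarTower [Algebra F S] [IsScalarTower R F S] {C : Type*} [CommRing C]
    [Algebra R C] [Algebra F C] [Algebra S C] [IsScalarTower R F C] [IsScalarTower F S C]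
    [Algebra.FormallyEtale F S] [Algebra.FormallyEtale F C] [Algebra.FormallyEtale R S] :
    Algebra.FormallyEtale R C :=
  have : IsScalarTower R S C := .to₁₃₄ R F S C
  have : Algebra.FormallyEtale S C := .of_restrictScalars (R := F)
  .comp R S C

theorem ker_algHom_fg [Module.Finite R F] (σ : F →ₐ[R] R) : (RingHom.ker σ).FG := by
  have := Module.FinitePresentation.fg_ker σ.toLinearMap (fun r ↦ ⟨algebraMap R F r, by simp⟩)
  exact Submodule.FG.of_restrictScalars R this

theorem exists_isIdempotentElem_ker_eq_span [Algebra F S] [IsScalarTower R F S]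
    [Module.Finite R F] [Algebra.FormallyEtale F S] [Algebra.FormallyUnramified R S]
    (σ : S →ₐ[R] R) :
    ∃ e : F, IsIdempotentElem e ∧
      RingHom.ker (σ.comp (IsScalarTower.toAlgHom R F S)) = Ideal.span {e} := by
  let σF := σ.comp (IsScalarTower.toAlgHom R F S)
  have hsurj : Function.Surjective σF := fun r ↦ ⟨algebraMap R F r, by simp⟩
  refine (Ideal.isIdempotentElem_iff_of_fg _ (ker_algHom_fg σF)).mp ?_
  have hetale := formallyEtale_comp_toAlgHom (F := F) σ
  algebraize [σF.toRingHom]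
  exact (Algebra.FormallyEtale.iff_of_surjective hsurj).mp inferInstance

theorem bijective_algebraMap_of_ker_le_jacobson [Algebra.FormallyEtale R F]
    [Algebra.FinitePresentation R F] (hsurj : Function.Surjective (algebraMap R F))
    (hjac : RingHom.ker (algebraMap R F) ≤ Ideal.jacobson ⊥) :
    Function.Bijective (algebraMap R F) := by
  have hfg : (RingHom.ker (algebraMap R F)).FG :=
    Algebra.FinitePresentation.ker_fG_of_surjective (Algebra.ofId R F) hsurj
  have hidem := (Algebra.FormallyEtale.iff_of_surjective hsurj).mp inferInstance
  exact ⟨(RingHom.injective_iff_ker_eq_bot _).mpr <|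
    Submodule.eq_bot_of_le_smul_of_le_jacobson_bot _ _ hfg hidem.ge hjac, hsurj⟩

end Etale

section CutsOutPoint

open Polynomial

variable {A F : Type*} [CommRing A] [CommRing F] [Algebra A F] {I : Ideal A}

/-- For an `A ⧸ I`-point `σ` of `Spec F`, the element `θ` reduces modulo `I` to the idempotent of
`F ⧸ I F` whose component is exactly that point: it takes the value `1` at `σ`, and it kills
`ker σ` modulo `I F`. -/
structure CutsOutPoint (σ : F →ₐ[A] A ⧸ I) (θ : F) : Prop where
  map_eq_one : σ θ = 1
  mul_mem_map : ∀ x, σ x = 0 → θ * x ∈ I.map (algebraMap A F)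

theorem mem_smul_top_iff_mem_map {x : F} :
    x ∈ I • (⊤ : Submodule A F) ↔ x ∈ I.map (algebraMap A F) := by
  rw [Ideal.smul_top_eq_map, Submodule.restrictScalars_mem]

theorem map_algebraMap_le_ker (σ : F →ₐ[A] A ⧸ I) : I.map (algebraMap A F) ≤ RingHom.ker σ := by
  refine Ideal.map_le_iff_le_comap.mpr fun a ha ↦ ?_
  rw [Ideal.mem_comap, RingHom.mem_ker, AlgHom.commutes]
  exact Ideal.Quotient.eq_zero_iff_mem.mpr ha

namespace CutsOutPoint

variable {σ : F →ₐ[A] A ⧸ I} {θ : F}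

theorem mul_one_sub_mem_map (hθ : CutsOutPoint σ θ) : θ * (1 - θ) ∈ I.map (algebraMap A F) :=
  hθ.mul_mem_map _ (by rw [map_sub, map_one, hθ.map_eq_one, sub_self])

theorem exists_mul_sub_algebraMap_mem_map (hθ : CutsOutPoint σ θ) (x : F) :
    ∃ a : A, θ * (x - algebraMap A F a) ∈ I.map (algebraMap A F) := by
  obtain ⟨a, ha⟩ := Ideal.Quotient.mk_surjective (σ x)
  refine ⟨a, hθ.mul_mem_map _ ?_⟩
  rw [map_sub, AlgHom.commutes, ← ha, Ideal.Quotient.algebraMap_eq, sub_self]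

theorem of_sub_mem_map (hθ : CutsOutPoint σ θ) {ε : F} (hε : ε - θ ∈ I.map (algebraMap A F)) :
    CutsOutPoint σ ε where
  map_eq_one := by
    rw [← hθ.map_eq_one, ← sub_eq_zero, ← map_sub]
    exact map_algebraMap_le_ker σ hε
  mul_mem_map x hx := by
    rw [← sub_add_cancel ε θ, add_mul]
    exact add_mem (Ideal.mul_mem_right _ _ hε) (hθ.mul_mem_map x hx)

theorem span_range_option_elim_eq_top [Module.Finite A F] (hI : I ≤ Ideal.jacobson ⊥)
    (hθ : CutsOutPoint σ θ) {ι : Type*} {x : ι → F}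
    (hx : Submodule.span A (Set.range x) = ⊤) :
    Submodule.span A (Set.range fun o : Option ι ↦ o.elim θ ((1 - θ) * x ·)) = ⊤ := by
  refine top_le_iff.mp <|
    Submodule.le_of_le_smul_of_le_jacobson_bot (I := I) Module.Finite.fg_top hI ?_
  rw (occs := [1]) [← hx]
  rw [Submodule.span_le]
  rintro _ ⟨i, rfl⟩
  obtain ⟨a, ha⟩ := hθ.exists_mul_sub_algebraMap_mem_map (x i)
  have hxi : x i = (a • θ + (1 - θ) * x i) + θ * (x i - algebraMap A F a) := by
    rw [Algebra.smul_def]; ring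
  rw [hxi]
  exact add_mem (Submodule.mem_sup_left <| add_mem
      (Submodule.smul_mem _ _ <| Submodule.subset_span ⟨none, rfl⟩)
      (Submodule.subset_span ⟨some i, rfl⟩))
    (Submodule.mem_sup_right <| mem_smul_top_iff_mem_map.mpr ha)

theorem exists_monic_aeval_eq_zero [Module.Finite A F] (hI : I ≤ Ideal.jacobson ⊥)
    (hθ : CutsOutPoint σ θ) :
    ∃ (χ : A[X]) (n : ℕ), χ.Monic ∧ aeval θ χ = 0 ∧
      χ.map (algebraMap A (A ⧸ I)) = X ^ n * (X - 1) := by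
  obtain ⟨n, x, hx⟩ := Module.Finite.exists_fin (R := A) (M := F)
  have hmul (y : F) : θ * (1 - θ) * y ∈ I • (⊤ : Submodule A F) :=
    mem_smul_top_iff_mem_map.mpr <| Ideal.mul_mem_right _ _ hθ.mul_one_sub_mem_map
  obtain ⟨χ, hχ, hχ_zero, hχI⟩ := exists_monic_aeval_eq_zero_map_eq_prod
    (hθ.span_range_option_elim_eq_top hI hx) I (Algebra.lmul A F θ)
    (fun o ↦ o.elim 1 fun _ ↦ 0) (by
      rintro (_ | i)
      · convert hmul (-1) using 1
        simp only [Option.elim, Algebra.coe_lmul_eq_mul, LinearMap.mul_apply', one_smul]; ring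
      · convert hmul (x i) using 1
        simp only [Option.elim, Algebra.coe_lmul_eq_mul, LinearMap.mul_apply', zero_smul]; ring)
  refine ⟨χ, n, hχ, Algebra.lmul_injective (R := A) ?_, ?_⟩
  · rw [← aeval_algHom_apply, hχ_zero, map_zero]
  · rw [hχI, Fintype.prod_option]
    simp [mul_comm]

theorem exists_isIdempotentElem [HenselianRing A I] [Module.Finite A F]
    (hθ : CutsOutPoint σ θ) : ∃ ε : F, IsIdempotentElem ε ∧ CutsOutPoint σ ε := by
  obtain ⟨χ, n, hχ, hχ_zero, hχI⟩ := hθ.exists_monic_aeval_eq_zero HenselianRing.jac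
  obtain ⟨g, h, hgh, hcop, hg, hh⟩ :=
    exists_eq_mul_of_map_eq_X_pow_mul_X_sub_one I (f := X * χ) (monic_X.mul hχ) (n := n + 1) (by
      rw [Polynomial.map_mul, hχI, map_X, pow_succ', mul_assoc])
  have hθ_idem : IsIdempotentElem (Ideal.Quotient.mkₐ A (I.map (algebraMap A F)) θ) := by
    have hzero := Ideal.Quotient.eq_zero_iff_mem.mpr hθ.mul_one_sub_mem_map
    rw [mul_sub, mul_one, map_sub, sub_eq_zero, map_mul] at hzero
    exact hzero.symm
  obtain ⟨ε, hε, hεθ⟩ := exists_isIdempotentElem_map_eq_of_isCoprime (S := A ⧸ I)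
    (Ideal.Quotient.mkₐ A (I.map (algebraMap A F))) hθ_idem hcop
    (by rw [← hgh, map_mul, hχ_zero, mul_zero]) hg (n := 0) (by rw [hh, zero_add, pow_one])
  exact ⟨ε, hε, hθ.of_sub_mem_map (Ideal.Quotient.eq.mp hεθ)⟩

theorem algebraMap_quotient_surjective [Module.Finite A F] (hI : I ≤ Ideal.jacobson ⊥)
    (hθ : CutsOutPoint σ θ) :
    Function.Surjective (algebraMap A (F ⧸ Ideal.span {1 - θ})) := by
  let L : Ideal F := Ideal.span {1 - θ}
  have hθ_one : Ideal.Quotient.mk L θ = 1 :=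
    (Ideal.Quotient.eq.mpr (Ideal.mem_span_singleton_self _)).symm
  have htop : (⊤ : Submodule A (F ⧸ L)) ≤ LinearMap.range (Algebra.linearMap A (F ⧸ L)) := by
    refine Submodule.le_of_le_smul_of_le_jacobson_bot (I := I) Module.Finite.fg_top hI ?_
    rintro y -
    obtain ⟨x, rfl⟩ := Ideal.Quotient.mk_surjective y
    obtain ⟨a, ha⟩ := hθ.exists_mul_sub_algebraMap_mem_map x
    have hmem := Ideal.mem_map_of_mem (Ideal.Quotient.mk L) ha
    rw [map_mul, hθ_one, one_mul, map_sub, Ideal.map_map] at hmem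
    rw [← add_sub_cancel (Ideal.Quotient.mk L (algebraMap A F a)) (Ideal.Quotient.mk L x)]
    exact add_mem (Submodule.mem_sup_left ⟨a, rfl⟩)
      (Submodule.mem_sup_right <| mem_smul_top_iff_mem_map.mpr hmem)
  exact fun y ↦ htop Submodule.mem_top

end CutsOutPoint

variable {S : Type*} [CommRing S] [Algebra A S] [Algebra F S] [IsScalarTower A F S]

theorem exists_cutsOutPoint [Module.Finite A F] (M : Submonoid F) [IsLocalization M S]
    [Algebra.FormallyUnramified A S] (σ : S →ₐ[A] A ⧸ I) :
    ∃ θ : F, CutsOutPoint (σ.comp (IsScalarTower.toAlgHom A F S)) θ := by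
  let J := I.map (algebraMap A F)
  let JS := J.map (algebraMap F S)
  let : Algebra (A ⧸ I) (S ⧸ JS) :=
    ((algebraMap (F ⧸ J) (S ⧸ JS)).comp (algebraMap (A ⧸ I) (F ⧸ J))).toAlgebra
  have : IsScalarTower (A ⧸ I) (F ⧸ J) (S ⧸ JS) := .of_algebraMap_eq' rfl
  have : IsScalarTower A (A ⧸ I) (S ⧸ JS) := .of_algebraMap_eq fun a ↦
    congrArg (Ideal.Quotient.mk JS) (IsScalarTower.algebraMap_apply A F S a)
  have : Module.Finite (A ⧸ I) (F ⧸ J) := .of_restrictScalars_finite A _ _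
  have : Algebra.FormallyEtale (F ⧸ J) (S ⧸ JS) :=
    .of_isLocalization (Algebra.algebraMapSubmonoid (F ⧸ J) M)
  have : Algebra.FormallyUnramified A (S ⧸ JS) := inferInstance
  have : Algebra.FormallyUnramified (A ⧸ I) (S ⧸ JS) := .of_restrictScalars A _ _
  have hJS : JS ≤ RingHom.ker σ := Ideal.map_le_iff_le_comap.mpr <|
    map_algebraMap_le_ker (σ.comp (IsScalarTower.toAlgHom A F S))
  let σI : S ⧸ JS →ₐ[A ⧸ I] A ⧸ I :=
    (Ideal.Quotient.liftₐ JS σ hJS).extendScalarsOfSurjective Ideal.Quotient.mk_surjective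
  obtain ⟨e, he, hker⟩ := exists_isIdempotentElem_ker_eq_span (F := F ⧸ J) σI
  obtain ⟨η, rfl⟩ := Ideal.Quotient.mk_surjective e
  have mem_ker (x : F) : Ideal.Quotient.mk J x ∈ Ideal.span {Ideal.Quotient.mk J η} ↔
      σ (algebraMap F S x) = 0 := by
    rw [← hker]
    rfl
  refine ⟨1 - η, ?_, fun x hx ↦ ?_⟩
  · have hη := (mem_ker η).mp (Ideal.mem_span_singleton_self _)
    rw [map_sub, map_one, sub_eq_self]
    exact hη
  · obtain ⟨y, hy⟩ := Ideal.mem_span_singleton.mp ((mem_ker x).mpr hx)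
    refine Ideal.Quotient.eq_zero_iff_mem.mp ?_
    rw [map_mul, map_sub, map_one, hy, ← mul_assoc, he.one_sub_mul_self, zero_mul]

theorem isLocalHom_algHom_of_surjective_algebraMap {C : Type*} [CommRing C] [Algebra A C]
    (hI : I ≤ Ideal.jacobson ⊥) (hC : Function.Surjective (algebraMap A C))
    (ρ : C →ₐ[A] A ⧸ I) : IsLocalHom ρ where
  map_nonunit c hc := by
    obtain ⟨a, rfl⟩ := hC c
    have := isLocalHom_of_le_jacobson_bot I hI
    rw [AlgHom.commutes] at hc
    exact (IsUnit.of_map (Ideal.Quotient.mk I) a hc).map _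

theorem ker_algebraMap_le_of_algHom {C : Type*} [CommRing C] [Algebra A C]
    (ρ : C →ₐ[A] A ⧸ I) : RingHom.ker (algebraMap A C) ≤ I := fun a ha ↦
  Ideal.Quotient.eq_zero_iff_mem.mp <| by
    rw [← Ideal.Quotient.algebraMap_eq, ← ρ.commutes, RingHom.mem_ker.mp ha, map_zero]

theorem bijective_algebraMap_of_algHom_quotient {C : Type*} [CommRing C] [Algebra A C]
    [Algebra.FormallyEtale A C] [Algebra.FinitePresentation A C] (hI : I ≤ Ideal.jacobson ⊥)
    (hC : Function.Surjective (algebraMap A C)) (ρ : C →ₐ[A] A ⧸ I) :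
    Function.Bijective (algebraMap A C) :=
  bijective_algebraMap_of_ker_le_jacobson hC ((ker_algebraMap_le_of_algHom ρ).trans hI)

theorem exists_algHom_mkₐ_comp_eq [HenselianRing A I] [Module.Finite A F]
    [Algebra.FinitePresentation A F] (Δ : F) [IsLocalization.Away Δ S]
    [Algebra.FormallyEtale A S] (σ : S →ₐ[A] A ⧸ I) :
    ∃ τ : S →ₐ[A] A, (Ideal.Quotient.mkₐ A I).comp τ = σ := by
  obtain ⟨θ, hθ⟩ := exists_cutsOutPoint (.powers Δ) σ
  obtain ⟨ε, hε, hεσ⟩ := hθ.exists_isIdempotentElem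
  let L : Ideal F := Ideal.span {1 - ε}
  let ρ : F ⧸ L →ₐ[A] A ⧸ I :=
    Ideal.Quotient.liftₐ L (σ.comp (IsScalarTower.toAlgHom A F S)) <|
      (Ideal.span_singleton_le_iff_mem (RingHom.ker _)).mpr <| by
        rw [RingHom.mem_ker, map_sub, map_one, hεσ.map_eq_one, sub_self]
  have hsurj : Function.Surjective (algebraMap A (F ⧸ L)) :=
    hεσ.algebraMap_quotient_surjective HenselianRing.jac
  have := isLocalHom_algHom_of_surjective_algebraMap HenselianRing.jac hsurj ρ
  have hΔ : IsUnit (Ideal.Quotient.mkₐ A L Δ) :=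
    .of_map ρ _ ((IsLocalization.Away.algebraMap_isUnit Δ).map σ)
  let g : S →ₐ[A] F ⧸ L := IsLocalization.Away.liftAlgHom (f := Ideal.Quotient.mkₐ A L) Δ hΔ
  have hg (x : F) : g (algebraMap F S x) = Ideal.Quotient.mk L x := by
    simp [g]
  have hρg : ρ.comp g = σ := IsLocalization.algHom_ext (.powers Δ) <| AlgHom.ext fun x ↦
    congrArg ρ (hg x)
  have hbij : Function.Bijective (algebraMap A (F ⧸ L)) := by
    algebraize [g.toRingHom]
    have : IsScalarTower F S (F ⧸ L) := .of_algebraMap_eq fun x ↦ (hg x).symm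
    have : IsLocalization.Away ε (F ⧸ L) := IsLocalization.Away.quotient_of_isIdempotentElem hε
    have : Algebra.FormallyEtale F (F ⧸ L) := .of_isLocalization (.powers ε)
    have : Algebra.FormallyEtale F S := .of_isLocalization (.powers Δ)
    have : Algebra.FinitePresentation A (F ⧸ L) :=
      .quotient (Submodule.fg_span (Set.finite_singleton _))
    have : Algebra.FormallyEtale A (F ⧸ L) := formallyEtale_of_scalarTower (F := F) (S := S)
    exact bijective_algebraMap_of_algHom_quotient HenselianRing.jac hsurj ρ
  let e : A ≃ₐ[A] F ⧸ L := AlgEquiv.ofBijective (Algebra.ofId A _) hbij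
  refine ⟨(e.symm : F ⧸ L →ₐ[A] A).comp g, ?_⟩
  have hρ : ρ.comp (e : A →ₐ[A] F ⧸ L) = Ideal.Quotient.mkₐ A I := AlgHom.ext ρ.commutes
  rw [← hρ, ← hρg]
  ext x
  simp

end CutsOutPoint

section Factorization

open Polynomial

variable {A : Type*} [CommRing A] (I : Ideal A) [HenselianRing A I]

theorem exists_eq_mul_of_map_eq_mul {f : A[X]} (hf : f.Monic) {g₀ h₀ : (A ⧸ I)[X]}
    (hg₀ : g₀.Monic) (hh₀ : h₀.Monic) (hcop : IsCoprime g₀ h₀)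
    (hfI : f.map (algebraMap A (A ⧸ I)) = g₀ * h₀) :
    ∃ g h : A[X], g.Monic ∧ h.Monic ∧ f = g * h ∧ IsCoprime g h ∧
      g.map (algebraMap A (A ⧸ I)) = g₀ ∧ h.map (algebraMap A (A ⧸ I)) = h₀ := by
  cases subsingleton_or_nontrivial (A ⧸ I)
  · exact ⟨f, 1, hf, monic_one, (mul_one f).symm, isCoprime_one_right, Subsingleton.elim _ _,
      Subsingleton.elim _ _⟩
  have hdeg : f.natDegree = g₀.natDegree + h₀.natDegree := by
    rw [← hg₀.natDegree_mul hh₀, ← hfI, hf.natDegree_map]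
  let p : MonicDegreeEq A f.natDegree := .mk f hf rfl
  let U := UniversalCoprimeFactorizationRing g₀.natDegree h₀.natDegree hdeg p
  let σ : U →ₐ[A] A ⧸ I := (UniversalCoprimeFactorizationRing.homEquiv (A ⧸ I) _ _ hdeg p).symm
    ⟨(.mk g₀ hg₀ rfl, .mk h₀ hh₀ rfl), hfI.symm, hcop⟩
  obtain ⟨τ, hτ⟩ :=
    exists_algHom_mkₐ_comp_eq (UniversalFactorizationRing.presentation _ _ hdeg p).jacobian σ
  let q := UniversalCoprimeFactorizationRing.homEquiv A _ _ hdeg p τ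
  have hfst := UniversalCoprimeFactorizationRing.homEquiv_comp_fst _ _ _ hdeg p τ
    (Ideal.Quotient.mkₐ A I)
  have hsnd := UniversalCoprimeFactorizationRing.homEquiv_comp_snd _ _ _ hdeg p τ
    (Ideal.Quotient.mkₐ A I)
  simp only [hτ, σ, Equiv.apply_symm_apply] at hfst hsnd
  refine ⟨q.1.1, q.1.2, q.1.1.monic, q.1.2.monic, ?_, q.2.2, congrArg Subtype.val hfst.symm,
    congrArg Subtype.val hsnd.symm⟩
  rw [q.2.1]
  simp [p]

theorem exists_isIdempotentElem_matrix_map_eq {ι : Type*} [Fintype ι]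
    {e : Matrix ι ι (A ⧸ I)} (he : IsIdempotentElem e) :
    ∃ ε : Matrix ι ι A, IsIdempotentElem ε ∧ ε.map (algebraMap A (A ⧸ I)) = e := by
  classical
  let φ : Matrix ι ι A →ₐ[A] Matrix ι ι (A ⧸ I) := (Algebra.ofId A (A ⧸ I)).mapMatrix
  obtain ⟨x, rfl⟩ : ∃ x, φ x = e :=
    ⟨e.map (Function.surjInv Ideal.Quotient.mk_surjective),
      Matrix.ext fun _ _ ↦ Function.surjInv_eq _ _⟩
  cases subsingleton_or_nontrivial A
  · exact ⟨x, Subsingleton.elim _ _, rfl⟩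
  -- The extra factor `X` keeps the exponent positive when `ι` is empty.
  let p : A[X] := X * (x ^ 2 - x).charpoly
  have hxI : (x ^ 2 - x).map (algebraMap A (A ⧸ I)) = 0 := by
    change φ (x ^ 2 - x) = 0
    rw [map_sub, map_pow, he.pow_succ_eq, sub_self]
  have hpI : p.map (algebraMap A (A ⧸ I)) = X ^ (Fintype.card ι + 1) := by
    rw [Polynomial.map_mul, ← Matrix.charpoly_map, hxI, Matrix.charpoly_zero, map_X, pow_succ']
  have hroot : aeval x (p.comp (X ^ 2 - X)) = 0 := by
    rw [aeval_comp, map_sub, map_pow, aeval_X, map_mul, Matrix.aeval_self_charpoly, mul_zero]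
  have hdeg : (X ^ 2 - X : A[X]).natDegree = 2 := by compute_degree!
  have hmonic : (p.comp (X ^ 2 - X)).Monic :=
    (monic_X.mul (Matrix.charpoly_monic _)).comp (by monicity!) (by omega)
  have hmap : (p.comp (X ^ 2 - X)).map (algebraMap A (A ⧸ I)) =
      X ^ (Fintype.card ι + 1) * (X - 1) ^ (Fintype.card ι + 1) := by
    rw [Polynomial.map_comp, hpI, X_pow_comp, ← mul_pow, Polynomial.map_sub, Polynomial.map_pow,
      map_X]
    ring
  have hcop : IsCoprime (X : (A ⧸ I)[X]) (X - 1) := ⟨1, -1, by ring⟩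
  obtain ⟨g, h, -, -, hgh, hcop, hg, hh⟩ := exists_eq_mul_of_map_eq_mul I hmonic (monic_X_pow _)
    ((monic_X_sub_C (1 : A ⧸ I)).pow _) hcop.pow hmap
  exact exists_isIdempotentElem_map_eq_of_isCoprime (S := A ⧸ I) φ he hcop (hgh ▸ hroot) hg hh

end Factorization

section Splitting

variable {R : Type*} [CommRing R]

/-- Two splittings of the same idempotent endomorphism of `V` have isomorphic images. -/
def linearEquivOfCompEqComp {V M N : Type*} [AddCommMonoid V] [Module R V] [AddCommMonoid M]
    [Module R M] [AddCommMonoid N] [Module R N] {i : M →ₗ[R] V} {π : V →ₗ[R] M}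
    {j : N →ₗ[R] V} {ρ : V →ₗ[R] N} (hπi : π ∘ₗ i = .id) (hρj : ρ ∘ₗ j = .id)
    (h : i ∘ₗ π = j ∘ₗ ρ) : M ≃ₗ[R] N :=
  .ofLinearMap (ρ ∘ₗ i) (π ∘ₗ j)
    (calc
      (ρ ∘ₗ i) ∘ₗ (π ∘ₗ j) = ρ ∘ₗ (i ∘ₗ π) ∘ₗ j := rfl
      _ = (ρ ∘ₗ j) ∘ₗ (ρ ∘ₗ j) := by rw [h]; rfl
      _ = .id := by rw [hρj, LinearMap.id_comp])
    (calc
      (π ∘ₗ j) ∘ₗ (ρ ∘ₗ i) = π ∘ₗ (j ∘ₗ ρ) ∘ₗ i := rfl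
      _ = (π ∘ₗ i) ∘ₗ (π ∘ₗ i) := by rw [← h]; rfl
      _ = .id := by rw [hπi, LinearMap.id_comp])

theorem rangeRestrict_comp_subtype_of_isIdempotentElem {V : Type*} [AddCommGroup V] [Module R V]
    {E : Module.End R V} (hE : IsIdempotentElem E) :
    E.rangeRestrict ∘ₗ (LinearMap.range E).subtype = .id := by
  ext ⟨_, y, rfl⟩
  exact LinearMap.congr_fun hE.eq y

variable {S ι : Type*} [CommRing S] [Algebra R S] [Fintype ι] [DecidableEq ι]

theorem baseChange_toLin' (ε : Matrix ι ι R) :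
    (Matrix.toLin' ε).baseChange S =
      (piScalarRight R S S ι).symm ∘ₗ Matrix.toLin' (ε.map (algebraMap R S)) ∘ₗ
        (piScalarRight R S S ι).toLinearMap := by
  rw [LinearEquiv.eq_toLinearMap_symm_comp]
  ext i j
  simp [Matrix.mulVec, dotProduct, Pi.single_apply, Algebra.algebraMap_eq_smul_one]

theorem nonempty_baseChange_range_toLin'_linearEquiv {P : Type*} [AddCommGroup P] [Module S P]
    {p : (ι → S) →ₗ[S] P} {s : P →ₗ[S] ι → S} (hps : p ∘ₗ s = .id) {ε : Matrix ι ι R}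
    (hε : IsIdempotentElem ε) (hεS : ε.map (algebraMap R S) = LinearMap.toMatrix' (s ∘ₗ p)) :
    Nonempty (S ⊗[R] LinearMap.range (Matrix.toLin' ε) ≃ₗ[S] P) := by
  let E := Matrix.toLin' ε
  let c := piScalarRight R S S ι
  have hE : IsIdempotentElem E := hε.map Matrix.toLinAlgEquiv'
  have hsplit : E.rangeRestrict.baseChange S ∘ₗ (LinearMap.range E).subtype.baseChange S = .id := by
    rw [← LinearMap.baseChange_comp, rangeRestrict_comp_subtype_of_isIdempotentElem hE,
      LinearMap.baseChange_id]
  have hps' : (p ∘ₗ c.toLinearMap) ∘ₗ (c.symm.toLinearMap ∘ₗ s) = .id := by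
    ext x
    simpa using LinearMap.congr_fun hps x
  refine ⟨linearEquivOfCompEqComp hsplit hps' ?_⟩
  calc (LinearMap.range E).subtype.baseChange S ∘ₗ E.rangeRestrict.baseChange S
      = E.baseChange S := by
        rw [← LinearMap.baseChange_comp, LinearMap.subtype_comp_codRestrict]
    _ = c.symm ∘ₗ (s ∘ₗ p) ∘ₗ c := by
        rw [baseChange_toLin', hεS, Matrix.toLin'_toMatrix']

end Splitting

/-- **Henselian pairs: surjectivity of base change on isomorphism classes of finite
projective modules.** Let `(A, I)` be a henselian pair. Every finite projective
`A/I`-module `P` lifts to a finite projective `A`-module `M`, i.e. there is an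
isomorphism of `A/I`-modules `M/IM ≅ P`. -/
theorem henselian_finite_projective_baseChange_surjective
    {A : Type u} [CommRing A] (I : Ideal A) [HenselianRing A I]
    (P : Type v) [AddCommGroup P] [Module (A ⧸ I) P]
    [Module.Finite (A ⧸ I) P] [Module.Projective (A ⧸ I) P] :
    ∃ (M : Type (max u v)) (_ : AddCommGroup M) (_ : Module A M),
      Module.Finite A M ∧ Module.Projective A M ∧
        Nonempty (((A ⧸ I) ⊗[A] M) ≃ₗ[A ⧸ I] P) := by
  obtain ⟨n, p, hp⟩ := Module.Finite.exists_fin' (A ⧸ I) P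
  obtain ⟨s, hps⟩ := Module.projective_lifting_property p .id hp
  have hsp : IsIdempotentElem (s ∘ₗ p) := by
    change s ∘ₗ (p ∘ₗ s) ∘ₗ p = s ∘ₗ p
    rw [hps, LinearMap.id_comp]
  obtain ⟨ε, hε, hεI⟩ :=
    exists_isIdempotentElem_matrix_map_eq I (hsp.map LinearMap.toMatrixAlgEquiv')
  obtain ⟨f⟩ := nonempty_baseChange_range_toLin'_linearEquiv hps hε hεI
  have : Module.Projective A (LinearMap.range (Matrix.toLin' ε)) :=
    .of_split _ _ (rangeRestrict_comp_subtype_of_isIdempotentElem (hε.map Matrix.toLinAlgEquiv'))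
  exact ⟨ULift.{v} (LinearMap.range (Matrix.toLin' ε)), inferInstance, inferInstance,
    inferInstance, .of_equiv ULift.moduleEquiv.symm,
    ⟨ULift.moduleEquiv.baseChange A (A ⧸ I) _ _ ≪≫ₗ f⟩⟩
end

section
/- Let (A, I) be a henselian pair, let M be a finite projective A-module, and let F ⊆ M be an A-submodule such that I·M ⊆ F and such that the quotient M/F — which is naturally a module over A/I because I·M ⊆ F — is a finite projective A/I-module. Then there exist A-submodules L, T ⊆ M such that M = L ⊕ T (an internal direct sum decomposition of M, so that in particular L and T are finite projective A-modules) and F = L + I·T. (Existence of normal decompositions.) -/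
open TensorProduct

/-! As `M` is projective, a splitting of `M/IM → M/F` lifts to an endomorphism `e` of `M` with
`F = e⁻¹(IM)` and `e² ≡ e` modulo `I`. Cayley–Hamilton gives a monic polynomial annihilating `e`
whose reduction modulo `I` is a power of `X(X - 1)`; lifting the coprime factorization
`Xⁿ(X - 1)ⁿ` replaces `e` by an idempotent congruent to it, whose kernel and range are `L` and `T`.

`HenselianRing` provides lifts of simple roots only. A coprime factorization modulo `I` is an
`A/I`-point of an étale localization of a finite `A`-algebra `S` (the universal factorization ring).
Because the point is unramified, some `s ∈ S` with value `1` at it acts on `S` modulo `I` with rank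
one. A matrix representing `s` then has characteristic polynomial with the simple root `1` modulo
`I`, which lifts to an eigenvalue; every `x ∈ S` scales the eigenvector, and the scalars form the
lifted point. -/

section RankOne

open Polynomial

variable {A M : Type*} [CommRing A] {I : Ideal A} [AddCommGroup M] [Module A M]

lemma aeval_charpoly_eq_zero_of_represents_s2 {ι : Type*} [Fintype ι] [DecidableEq ι] {v : ι → M}
    (hv : Submodule.span A (Set.range v) = ⊤) {W : Matrix ι ι A} {f : Module.End A M}
    (hW : W.Represents v f) : aeval f W.charpoly = 0 := by
  let W' : Matrix.isRepresentation A v := ⟨W, f, hW⟩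
  have hW' : aeval W' W.charpoly = 0 := by
    ext1
    rw [aeval_subalgebra_coe, Matrix.aeval_self_charpoly, Subalgebra.coe_zero]
  rw [← Matrix.isRepresentation.eq_toEnd_of_represents A v hv W' hW, aeval_algHom_apply, hW',
    map_zero]

lemma isRoot_one_and_derivative_eval_one_charpoly_vecMulVec {R ι : Type*} [CommRing R] [Fintype ι]
    [DecidableEq ι] {u v : ι → R} (huv : u ⬝ᵥ v = 1) :
    (Matrix.vecMulVec u v).charpoly.IsRoot 1 ∧
      (derivative (Matrix.vecMulVec u v).charpoly).eval 1 = 1 := by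
  rcases isEmpty_or_nonempty ι with hι | hι
  · have : Subsingleton R := subsingleton_of_zero_eq_one (by simpa using huv)
    exact ⟨Subsingleton.elim _ _, Subsingleton.elim _ _⟩
  · obtain ⟨n, hn⟩ := Nat.exists_eq_succ_of_ne_zero (Fintype.card_ne_zero (α := ι))
    simp [Matrix.charpoly_vecMulVec, huv, hn, derivative_X_pow]

lemma exists_monic_aeval_eq_zero_of_rank_one [Module.Finite A M] (ℓ : M →ₗ[A] A ⧸ I) {m : M}
    (hm : ℓ m = 1) {f : Module.End A M}
    (hf : ∀ x a, ℓ x = Ideal.Quotient.mk I a → f x - a • m ∈ I • (⊤ : Submodule A M)) :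
    ∃ χ : A[X], χ.Monic ∧ aeval f χ = 0 ∧ (χ.map (Ideal.Quotient.mk I)).IsRoot 1 ∧
      (derivative (χ.map (Ideal.Quotient.mk I))).eval 1 = 1 := by
  obtain ⟨n, v, hv⟩ := Module.Finite.exists_fin (R := A) (M := M)
  choose c hc using fun j ↦ Ideal.Quotient.mk_surjective (ℓ (v j))
  obtain ⟨w, hw⟩ := (Submodule.mem_span_range_iff_exists_fun A).mp (hv ▸ Submodule.mem_top (x := m))
  have hcol (j) : ∃ N : Fin n → A, (∀ i, N i ∈ I) ∧ ∑ i, N i • v i = f (v j) - c j • m := by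
    have := hf (v j) (c j) (hc j).symm
    rw [← hv, Submodule.mem_ideal_smul_span_iff_exists_sum] at this
    obtain ⟨N, hN, hsum⟩ := this
    exact ⟨N, hN, by rwa [Finsupp.sum_fintype _ _ (by simp)] at hsum⟩
  choose N hNI hN using hcol
  let W : Matrix (Fin n) (Fin n) A := Matrix.vecMulVec w c + .of fun i j ↦ N j i
  have hW : W.Represents v f := by
    rw [Matrix.represents_iff']
    intro j
    simp only [W, Matrix.add_apply, Matrix.vecMulVec_apply, Matrix.of_apply, add_smul,
      Finset.sum_add_distrib, hN, mul_comm _ (c j), mul_smul, ← Finset.smul_sum, hw,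
      add_sub_cancel]
  have hWI : W.map (Ideal.Quotient.mk I) =
      Matrix.vecMulVec (Ideal.Quotient.mk I ∘ w) (Ideal.Quotient.mk I ∘ c) := by
    ext i j
    simp [W, Matrix.vecMulVec_apply, Ideal.Quotient.eq_zero_iff_mem.mpr (hNI j i)]
  have hwc : (Ideal.Quotient.mk I ∘ w) ⬝ᵥ (Ideal.Quotient.mk I ∘ c) = 1 := by
    rw [← hm, ← hw, map_sum]
    simp [dotProduct, hc, Algebra.smul_def]
  refine ⟨W.charpoly, W.charpoly_monic, aeval_charpoly_eq_zero_of_represents_s2 hv hW, ?_⟩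
  rw [← Matrix.charpoly_map, hWI]
  exact isRoot_one_and_derivative_eval_one_charpoly_vecMulVec hwc

lemma smul_top_le_ker (ℓ : M →ₗ[A] A ⧸ I) : I • (⊤ : Submodule A M) ≤ LinearMap.ker ℓ :=
  Submodule.smul_le.mpr fun a ha x _ ↦ by
    rw [LinearMap.mem_ker, map_smul, Algebra.smul_def, Ideal.Quotient.algebraMap_eq,
      Ideal.Quotient.eq_zero_iff_mem.mpr ha, zero_mul]

lemma apply_aeval_eq_eval_one_smul {N : Type*} [AddCommGroup N] [Module A N] {ℓ : M →ₗ[A] N}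
    {f : Module.End A M} (hf : ℓ ∘ₗ f = ℓ) (q : A[X]) (x : M) :
    ℓ (aeval f q x) = q.eval 1 • ℓ x := by
  obtain ⟨q', hq'⟩ := X_sub_C_dvd_sub_C_eval (a := 1) (p := q)
  have hq : aeval f q x = (q.eval 1) • x + (f (aeval f q' x) - aeval f q' x) := by
    rw [sub_eq_iff_eq_add'.mp hq']
    simp
  rw [hq, map_add, map_smul, map_sub, ← LinearMap.comp_apply, hf, sub_self, add_zero]

lemma exists_eigenvector_of_rank_one [HenselianRing A I] [Module.Finite A M] (ℓ : M →ₗ[A] A ⧸ I)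
    {m : M} (hm : ℓ m = 1) {f : Module.End A M}
    (hf : ∀ x a, ℓ x = Ideal.Quotient.mk I a → f x - a • m ∈ I • (⊤ : Submodule A M)) :
    ∃ (r : A) (y : M), Ideal.Quotient.mk I r = 1 ∧ ℓ y = 1 ∧ f y = r • y := by
  obtain ⟨χ, hmonic, hχf, hroot, hderiv⟩ := exists_monic_aeval_eq_zero_of_rank_one ℓ hm hf
  obtain ⟨r, hr, hr1⟩ := HenselianRing.is_henselian (I := I) χ hmonic 1
    (by rwa [← Ideal.Quotient.eq_zero_iff_mem, ← eval_map_apply, map_one])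
    (by rw [← eval_map_apply, ← derivative_map, map_one, hderiv]; exact isUnit_one)
  replace hr1 : Ideal.Quotient.mk I r = 1 := by
    rwa [← Ideal.Quotient.eq_zero_iff_mem, map_sub, map_one, sub_eq_zero] at hr1
  obtain ⟨q, rfl⟩ := dvd_iff_isRoot.mpr hr
  have hq : Ideal.Quotient.mk I (q.eval 1) = 1 := by
    rw [← eval_map_apply, map_one]
    simpa [hr1, derivative_mul] using hderiv
  have hℓf : ℓ ∘ₗ f = ℓ := by
    ext x
    obtain ⟨a, ha⟩ := Ideal.Quotient.mk_surjective (ℓ x)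
    have h := smul_top_le_ker ℓ (hf x a ha.symm)
    rw [LinearMap.mem_ker, map_sub, map_smul, hm, Algebra.smul_def, mul_one,
      Ideal.Quotient.algebraMap_eq, ha] at h
    exact sub_eq_zero.mp h
  refine ⟨r, aeval f q m, hr1, ?_, ?_⟩
  · rw [apply_aeval_eq_eval_one_smul hℓf, hm, Algebra.smul_def, mul_one]
    exact hq
  · simpa [sub_eq_zero] using LinearMap.congr_fun hχf m

end RankOne

lemma smul_eq_zero_of_isUnit_apply {A M : Type*} [CommRing A] {I : Ideal A}
    (hI : I ≤ (⊥ : Ideal A).jacobson) [AddCommGroup M] [Module A M] [Module.Flat A M]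
    (ℓ : M →ₗ[A] A ⧸ I) {m : M} (hm : IsUnit (ℓ m)) {r : A} (hr : r • m = 0) : r = 0 := by
  have hloc := isLocalHom_of_le_jacobson_bot I hI
  have hrel : Module.IsTrivialRelation (fun _ : Unit ↦ r) (fun _ ↦ m) :=
    Module.Flat.isTrivialRelation_of_sum_smul_eq_zero (by simpa)
  obtain ⟨n, a, y, hay, hra⟩ := hrel
  replace hay : m = ∑ j, a () j • y j := hay ()
  replace hra (j) : r * a () j = 0 := by simpa using hra j
  choose c hc using fun j ↦ Ideal.Quotient.mk_surjective (ℓ (y j))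
  have hac : Ideal.Quotient.mk I (∑ j, a () j * c j) = ℓ m := by
    simp [hay, hc, Algebra.smul_def]
  have hunit : IsUnit (∑ j, a () j * c j) :=
    (isUnit_map_iff (Ideal.Quotient.mk I) _).mp (hac ▸ hm)
  refine hunit.mul_left_eq_zero.mp ?_
  simp [Finset.mul_sum, ← mul_assoc, hra]

section Points

variable {A S : Type*} [CommRing A] {I : Ideal A} [CommRing S] [Algebra A S]

lemma sub_algebraMap_mem_ker {σ : S →ₐ[A] A ⧸ I} {x : S} {a : A}
    (h : σ x = Ideal.Quotient.mk I a) : x - algebraMap A S a ∈ RingHom.ker σ := by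
  rw [RingHom.mem_ker, map_sub, AlgHom.commutes, h, Ideal.Quotient.algebraMap_eq, sub_self]

lemma eq_comp_algHom_of_isNilpotent_ker (P : Submonoid S) {T B C : Type*} [CommRing T]
    [Algebra A T] [Algebra S T] [IsScalarTower A S T] [IsLocalization P T]
    [Algebra.FormallyUnramified A T] [CommRing B] [Algebra A B] [Ring C] [Algebra A C]
    {p : B →ₐ[A] C} (hp : IsNilpotent (RingHom.ker (p : B →+* C))) {f : S →ₐ[A] B} {g : T →ₐ[A] B}
    (hfg : p.comp f = p.comp (g.comp (Algebra.algHom A S T))) :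
    f = g.comp (Algebra.algHom A S T) := by
  have hunit (y : P) : IsUnit (f y) := by
    have hgy : IsUnit (g (algebraMap S T y)) := (IsLocalization.map_units T y).map g
    have hmem : f y - g (algebraMap S T y) ∈ RingHom.ker (p : B →+* C) := by
      rw [RingHom.mem_ker, map_sub, sub_eq_zero]
      exact AlgHom.congr_fun hfg y
    have hnil : IsNilpotent (f y - g (algebraMap S T y)) := by
      obtain ⟨n, hn⟩ := hp
      exact ⟨n, by simpa [hn] using Ideal.pow_mem_pow hmem n⟩
    rw [← sub_add_cancel (f y) (g (algebraMap S T y))]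
    exact hnil.isUnit_add_right_of_commute hgy (Commute.all _ _)
  let f' : T →ₐ[A] B := IsLocalization.liftAlgHom (M := P) hunit
  have hf' : f'.comp (Algebra.algHom A S T) = f := by
    ext x
    exact IsLocalization.lift_eq hunit x
  have hf'g : f' = g := by
    refine Algebra.FormallyUnramified.lift_unique' p hp _ _ (IsLocalization.algHom_ext P ?_)
    rw [AlgHom.comp_assoc, hf', hfg, AlgHom.comp_assoc]
  rw [← hf', hf'g]

lemma ker_le_map_sup_ker_sq (P : Submonoid S) {T : Type*} [CommRing T] [Algebra A T] [Algebra S T]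
    [IsScalarTower A S T] [IsLocalization P T] [Algebra.FormallyUnramified A T]
    (φ : T →ₐ[A] A ⧸ I) :
    RingHom.ker (φ.comp (Algebra.algHom A S T)) ≤
      I.map (algebraMap A S) ⊔ RingHom.ker (φ.comp (Algebra.algHom A S T)) ^ 2 := by
  set σ := φ.comp (Algebra.algHom A S T) with hσ
  set Z := I.map (algebraMap A S) ⊔ RingHom.ker σ ^ 2
  have hZσ : Z ≤ RingHom.ker σ := by
    refine sup_le (Ideal.map_le_of_le_comap fun a ha ↦ ?_) (Ideal.pow_le_self two_ne_zero)
    simpa [RingHom.mem_ker] using Ideal.Quotient.eq_zero_iff_mem.mpr ha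
  have hIZ : ∀ a ∈ I, Algebra.ofId A (S ⧸ Z) a = 0 := fun a ha ↦
    Ideal.Quotient.eq_zero_iff_mem.mpr (Ideal.mem_sup_left (Ideal.mem_map_of_mem _ ha))
  let p : S ⧸ Z →ₐ[A] A ⧸ I := Ideal.Quotient.liftₐ Z σ hZσ
  let j : A ⧸ I →ₐ[A] S ⧸ Z := Ideal.Quotient.liftₐ I (Algebra.ofId A (S ⧸ Z)) hIZ
  have hpj : p.comp j = AlgHom.id A (A ⧸ I) := Ideal.Quotient.algHom_ext A (by ext)
  have hker : IsNilpotent (RingHom.ker (p : S ⧸ Z →+* A ⧸ I)) := by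
    have hkerp : RingHom.ker (p : S ⧸ Z →+* A ⧸ I) = (RingHom.ker σ).map (Ideal.Quotient.mk Z) :=
      Ideal.ker_quotient_lift (σ : S →+* A ⧸ I) hZσ
    refine ⟨2, ?_⟩
    rw [hkerp, ← Ideal.map_pow]
    exact (Ideal.map_eq_bot_iff_le_ker _).mpr (by rw [Ideal.mk_ker]; exact le_sup_right)
  have hmk : Ideal.Quotient.mkₐ A Z = (j.comp φ).comp (Algebra.algHom A S T) :=
    eq_comp_algHom_of_isNilpotent_ker P hker <| by
      rw [AlgHom.comp_assoc, ← hσ, ← AlgHom.comp_assoc, hpj, AlgHom.id_comp]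
      rfl
  intro k hk
  rw [← Ideal.Quotient.eq_zero_iff_mem, ← Ideal.Quotient.mkₐ_eq_mk A, hmk, AlgHom.comp_assoc,
    ← hσ, AlgHom.comp_apply, RingHom.mem_ker.mp hk, map_zero]

lemma exists_sub_algebraMap_mem_of_adjoin_eq_top {s : Set S} (hs : Algebra.adjoin A s = ⊤)
    {K : Ideal S} (hsK : ∀ x ∈ s, ∃ a, x - algebraMap A S a ∈ K) (x : S) :
    ∃ a, x - algebraMap A S a ∈ K := by
  have hle : Algebra.adjoin A s ≤ (⊥ : Subalgebra A (S ⧸ K)).comap (Ideal.Quotient.mkₐ A K) := by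
    refine Algebra.adjoin_le fun x hx ↦ ?_
    obtain ⟨a, ha⟩ := hsK x hx
    exact Algebra.mem_bot.mpr ⟨a, (Ideal.Quotient.eq.mpr ha).symm⟩
  obtain ⟨a, ha⟩ := Algebra.mem_bot.mp (hle (hs.ge (Algebra.mem_top (x := x))))
  exact ⟨a, Ideal.Quotient.eq.mp ha.symm⟩

lemma exists_fg_le_ker_le_map_sup [Algebra.FiniteType A S] (σ : S →ₐ[A] A ⧸ I) :
    ∃ K : Ideal S, K.FG ∧ K ≤ RingHom.ker σ ∧ RingHom.ker σ ≤ I.map (algebraMap A S) ⊔ K := by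
  obtain ⟨s, hs⟩ := Algebra.FiniteType.out (R := A) (A := S)
  choose b hb using fun x : S ↦ Ideal.Quotient.mk_surjective (σ x)
  let K : Ideal S := Ideal.span ((fun x ↦ x - algebraMap A S (b x)) '' s)
  have hK : K ≤ RingHom.ker σ := by
    rw [Ideal.span_le]
    rintro _ ⟨x, -, rfl⟩
    exact sub_algebraMap_mem_ker (hb x).symm
  have hsK : ∀ x ∈ s, ∃ a, x - algebraMap A S a ∈ K := fun x hx ↦
    ⟨b x, Ideal.subset_span (Set.mem_image_of_mem (fun x ↦ x - algebraMap A S (b x)) hx)⟩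
  refine ⟨K, Submodule.fg_span (s.finite_toSet.image _), hK, fun x hx ↦ ?_⟩
  obtain ⟨a, ha⟩ := exists_sub_algebraMap_mem_of_adjoin_eq_top hs hsK x
  have haI : a ∈ I := by
    have := RingHom.mem_ker.mp (hK ha)
    rw [map_sub, RingHom.mem_ker.mp hx, zero_sub, neg_eq_zero, AlgHom.commutes] at this
    exact Ideal.Quotient.eq_zero_iff_mem.mp this
  rw [← sub_add_cancel x (algebraMap A S a), add_comm]
  exact Submodule.add_mem_sup (Ideal.mem_map_of_mem _ haI) ha

lemma exists_apply_eq_one_forall_mul_mem_map [Algebra.FiniteType A S] (σ : S →ₐ[A] A ⧸ I)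
    (hσ : RingHom.ker σ ≤ I.map (algebraMap A S) ⊔ RingHom.ker σ ^ 2) :
    ∃ s, σ s = 1 ∧ ∀ k ∈ RingHom.ker σ, s * k ∈ I.map (algebraMap A S) := by
  obtain ⟨K, hfg, hKσ, hσK⟩ := exists_fg_le_ker_le_map_sup σ
  have hle : RingHom.ker σ ≤ I.map (algebraMap A S) ⊔ RingHom.ker σ • K := by
    refine hσ.trans (sup_le le_sup_left ?_)
    calc RingHom.ker σ ^ 2
      _ ≤ RingHom.ker σ * (I.map (algebraMap A S) ⊔ K) := by
        rw [pow_two]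
        exact Ideal.mul_mono_right hσK
      _ ≤ I.map (algebraMap A S) ⊔ RingHom.ker σ • K := by
        rw [Ideal.mul_sup]
        exact sup_le_sup Ideal.mul_le_right le_rfl
  obtain ⟨s, hs, hsσ⟩ := Submodule.exists_sub_one_mem_and_smul_le_of_fg_of_le_sup hfg hKσ hle
  refine ⟨s, ?_, fun k hk ↦ hsσ (Submodule.smul_mem_pointwise_smul k s _ hk)⟩
  rwa [RingHom.mem_ker, map_sub, map_one, sub_eq_zero] at hs

lemma exists_mul_eq_smul_of_mul_eq_smul [Module.Finite A S] (hI : I ≤ (⊥ : Ideal A).jacobson)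
    (σ : S →ₐ[A] A ⧸ I) {s : S} (hs : ∀ k ∈ RingHom.ker σ, s * k ∈ I.map (algebraMap A S))
    {r : A} (hr : IsUnit r) {y : S} (hsy : s * y = r • y) (x : S) : ∃ b : A, x * y = b • y := by
  suffices hle : LinearMap.range (LinearMap.mulRight A y) ≤ Submodule.span A {y} by
    obtain ⟨b, hb⟩ := Submodule.mem_span_singleton.mp (hle ⟨x, rfl⟩)
    exact ⟨b, hb.symm⟩
  have hfg : (LinearMap.range (LinearMap.mulRight A y)).FG := by
    rw [LinearMap.range_eq_map]
    exact Module.Finite.fg_top.map _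
  have hker : ∀ k ∈ RingHom.ker σ, k * y ∈ I • LinearMap.range (LinearMap.mulRight A y) := by
    intro k hk
    have hsk : s * k ∈ I • (⊤ : Submodule A S) := by rw [Ideal.smul_top_eq_map]; exact hs k hk
    have hrk := Submodule.mem_map_of_mem (f := LinearMap.mulRight A y) hsk
    rw [Submodule.map_smul'', Submodule.map_top, LinearMap.mulRight_apply, mul_right_comm, hsy,
      smul_mul_assoc, mul_comm y k] at hrk
    exact (Submodule.smul_mem_iff_of_isUnit _ hr).mp hrk
  refine Submodule.le_of_le_smul_of_le_jacobson_bot hfg hI ?_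
  rintro _ ⟨x, rfl⟩
  obtain ⟨b, hb⟩ := Ideal.Quotient.mk_surjective (σ x)
  have hxy : LinearMap.mulRight A y x = b • y + (x - algebraMap A S b) * y := by
    rw [LinearMap.mulRight_apply, sub_mul, Algebra.smul_def]
    ring
  rw [hxy]
  exact Submodule.add_mem_sup (Submodule.smul_mem _ _ (Submodule.mem_span_singleton_self y))
    (hker _ (sub_algebraMap_mem_ker hb.symm))

lemma exists_algHom_mul_eq_smul {y : S} (hy : ∀ r : A, r • y = 0 → r = 0)
    (hmul : ∀ x, ∃ b : A, x * y = b • y) : ∃ f : S →ₐ[A] A, ∀ x, x * y = f x • y := by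
  choose f hf using hmul
  have eq_of_smul_eq {a b : A} (h : a • y = b • y) : a = b :=
    sub_eq_zero.mp (hy _ (by rw [sub_smul, h, sub_self]))
  let f' : S →ₗ[A] A :=
    { toFun := f
      map_add' := fun x z ↦ eq_of_smul_eq (by rw [← hf, add_mul, add_smul, hf, hf])
      map_smul' := fun a x ↦ eq_of_smul_eq (by
        rw [← hf, smul_mul_assoc, hf x, RingHom.id_apply, smul_assoc]) }
  refine ⟨AlgHom.ofLinearMap f' (eq_of_smul_eq ?_) fun x z ↦ eq_of_smul_eq ?_, hf⟩
  · change f 1 • y = _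
    rw [← hf, one_mul, one_smul]
  · change f (x * z) • y = (f x * f z) • y
    rw [← hf, mul_assoc, hf z, mul_smul_comm, hf x, smul_smul, mul_comm]

lemma exists_apply_eq_one_forall_exists_mul_eq_smul [HenselianRing A I] [Module.Finite A S]
    (σ : S →ₐ[A] A ⧸ I) (hσ : RingHom.ker σ ≤ I.map (algebraMap A S) ⊔ RingHom.ker σ ^ 2) :
    ∃ y, σ y = 1 ∧ ∀ x, ∃ b : A, x * y = b • y := by
  have hI : I ≤ (⊥ : Ideal A).jacobson := HenselianRing.jac
  have hloc := isLocalHom_of_le_jacobson_bot I hI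
  obtain ⟨s, hσs, hs⟩ := exists_apply_eq_one_forall_mul_mem_map σ hσ
  obtain ⟨r, y, hr, hσy, hsy⟩ :=
    exists_eigenvector_of_rank_one σ.toLinearMap hσs (f := LinearMap.mulLeft A s) <| by
      intro x a hx
      rw [Ideal.smul_top_eq_map, LinearMap.mulLeft_apply, Algebra.smul_def, mul_comm _ s, ← mul_sub]
      exact hs _ (sub_algebraMap_mem_ker hx)
  have hr' : IsUnit r := (isUnit_map_iff (Ideal.Quotient.mk I) r).mp (hr ▸ isUnit_one)
  exact ⟨y, hσy, exists_mul_eq_smul_of_mul_eq_smul hI σ hs hr' hsy⟩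

theorem exists_algHom_comp_eq [HenselianRing A I] [Module.Finite A S] (P : Submonoid S) {T : Type*}
    [CommRing T] [Algebra A T] [Algebra S T] [IsScalarTower A S T] [IsLocalization P T]
    [Algebra.FormallyUnramified A T] [Module.Flat A T] (φ : T →ₐ[A] A ⧸ I) :
    ∃ τ : T →ₐ[A] A, (Ideal.Quotient.mkₐ A I).comp τ = φ := by
  have hI : I ≤ (⊥ : Ideal A).jacobson := HenselianRing.jac
  have hloc := isLocalHom_of_le_jacobson_bot I hI
  set σ := φ.comp (Algebra.algHom A S T) with hσ
  obtain ⟨y, hσy, hmul⟩ :=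
    exists_apply_eq_one_forall_exists_mul_eq_smul σ (ker_le_map_sup_ker_sq P φ)
  have hφy : φ.toLinearMap (Algebra.algHom A S T y) = 1 := hσy
  have hy (r : A) (hr : r • y = 0) : r = 0 :=
    smul_eq_zero_of_isUnit_apply hI φ.toLinearMap (hφy ▸ isUnit_one)
      (by rw [← map_smul, hr, map_zero])
  obtain ⟨f, hf⟩ := exists_algHom_mul_eq_smul hy hmul
  have hfσ : (Ideal.Quotient.mkₐ A I).comp f = σ := by
    ext x
    have := congr(σ $(hf x))
    rw [map_mul, map_smul, hσy, mul_one, Algebra.smul_def, mul_one] at this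
    exact this.symm
  have hunit (p : P) : IsUnit (f p) := by
    refine (isUnit_map_iff (Ideal.Quotient.mk I) _).mp ?_
    rw [show Ideal.Quotient.mk I (f p) = φ (algebraMap S T p) from AlgHom.congr_fun hfσ p]
    exact (IsLocalization.map_units T p).map φ
  refine ⟨IsLocalization.liftAlgHom (M := P) hunit, IsLocalization.algHom_ext P ?_⟩
  rw [AlgHom.comp_assoc, ← hσ, ← hfσ]
  congr 1
  ext x
  exact IsLocalization.lift_eq hunit x

end Points

section Factorization

open Polynomial

variable {A : Type*} [CommRing A] {I : Ideal A}

lemma subsingleton_of_le_jacobson_bot {R : Type*} [CommRing R] {J : Ideal R}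
    (hJ : J ≤ (⊥ : Ideal R).jacobson) [Subsingleton (R ⧸ J)] : Subsingleton R := by
  have hbot : (⊥ : Ideal R).jacobson = ⊤ := by
    rw [eq_top_iff, ← Ideal.Quotient.subsingleton_iff.mp ‹_›]
    exact hJ
  exact (Submodule.subsingleton_iff R).mp
    (subsingleton_of_bot_eq_top (Ideal.jacobson_eq_top_iff.mp hbot))

variable [HenselianRing A I]

theorem exists_monic_isCoprime_mul_eq_of_map_eq_mul {P : A[X]} (hP : P.Monic)
    {g h : (A ⧸ I)[X]} (hg : g.Monic) (hh : h.Monic) (hgh : IsCoprime g h)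
    (hPgh : P.map (Ideal.Quotient.mk I) = g * h) :
    ∃ G H : A[X], G.Monic ∧ H.Monic ∧ IsCoprime G H ∧ G * H = P ∧
      G.map (Ideal.Quotient.mk I) = g ∧ H.map (Ideal.Quotient.mk I) = h := by
  rcases subsingleton_or_nontrivial (A ⧸ I) with _ | _
  · have := subsingleton_of_le_jacobson_bot (HenselianRing.jac (R := A) (I := I))
    exact ⟨1, 1, monic_one, monic_one, isCoprime_one_left, Subsingleton.elim _ _,
      Subsingleton.elim _ _, Subsingleton.elim _ _⟩
  have hn : P.natDegree = g.natDegree + h.natDegree := by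
    rw [← hP.natDegree_map (Ideal.Quotient.mk I), hPgh, hg.natDegree_mul hh]
  let p : MonicDegreeEq A P.natDegree := .mk P hP rfl
  let q : {q : MonicDegreeEq (A ⧸ I) g.natDegree × MonicDegreeEq (A ⧸ I) h.natDegree //
      q.1.1 * q.2.1 = p.1.map (algebraMap A (A ⧸ I)) ∧ IsCoprime q.1.1 q.2.1} :=
    ⟨(.mk g hg rfl, .mk h hh rfl), hPgh.symm, hgh⟩
  obtain ⟨τ, hτ⟩ := exists_algHom_comp_eq
    (Submonoid.powers (UniversalFactorizationRing.presentation _ _ hn p).jacobian)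
    ((UniversalCoprimeFactorizationRing.homEquiv (A ⧸ I) _ _ hn p).symm q)
  have hq : UniversalCoprimeFactorizationRing.homEquiv (A ⧸ I) _ _ hn p
      ((Ideal.Quotient.mkₐ A I).comp τ) = q := by
    rw [hτ, Equiv.apply_symm_apply]
  obtain ⟨hGH, hcop⟩ := (UniversalCoprimeFactorizationRing.homEquiv A _ _ hn p τ).2
  refine ⟨_, _, MonicDegreeEq.monic _, MonicDegreeEq.monic _, hcop, by simpa [p] using hGH, ?_, ?_⟩
  · have hfst := UniversalCoprimeFactorizationRing.homEquiv_comp_fst A _ _ hn p τ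
      (Ideal.Quotient.mkₐ A I)
    rw [hq] at hfst
    exact congr(($hfst).1).symm
  · have hsnd := UniversalCoprimeFactorizationRing.homEquiv_comp_snd A _ _ hn p τ
      (Ideal.Quotient.mkₐ A I)
    rw [hq] at hsnd
    exact congr(($hsnd).1).symm

lemma exists_dvd_sq_sub_and_dvd_map_sub_X {P : A[X]} (hP : P.Monic) {n : ℕ} (hn : n ≠ 0)
    (hPn : P.map (Ideal.Quotient.mk I) = (X ^ 2 - X) ^ n) :
    ∃ w : A[X], P ∣ w ^ 2 - w ∧ X ^ 2 - X ∣ (w - X).map (Ideal.Quotient.mk I) := by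
  have hcop : IsCoprime (X : (A ⧸ I)[X]) (X - 1) := ⟨1, -1, by ring⟩
  have hX : (X ^ 2 - X : (A ⧸ I)[X]) = X * (X - 1) := by ring
  have hmonic : (X - 1 : (A ⧸ I)[X]).Monic := by simpa using monic_X_sub_C (1 : A ⧸ I)
  obtain ⟨G, H, -, -, ⟨u, v, huv⟩, rfl, hG, hH⟩ :=
    exists_monic_isCoprime_mul_eq_of_map_eq_mul hP (monic_X.pow n) (hmonic.pow n) hcop.pow
      (by rw [hPn, hX, mul_pow])
  refine ⟨u * G, ⟨-(u * v), by linear_combination (u * G) * huv⟩, ?_⟩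
  rw [hX]
  refine hcop.mul_dvd ?_ ?_
  · rw [Polynomial.map_sub, Polynomial.map_mul, hG, map_X]
    exact dvd_sub ((dvd_pow_self X hn).mul_left _) dvd_rfl
  · have hvH : u * G - X = -(X - 1 + v * H) := by linear_combination huv
    rw [hvH, Polynomial.map_neg, dvd_neg, Polynomial.map_add, Polynomial.map_mul, hH]
    exact dvd_add (by simp) ((dvd_pow_self (X - 1) hn).mul_left _)

end Factorization

section Idempotent

open Polynomial

variable {A M : Type*} [CommRing A] {I : Ideal A} [AddCommGroup M] [Module A M]

lemma range_aeval_le_smul_top {t : A[X]} (ht : t.map (Ideal.Quotient.mk I) = 0)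
    (e : Module.End A M) : LinearMap.range (aeval e t) ≤ I • (⊤ : Submodule A M) := by
  rintro _ ⟨x, rfl⟩
  rw [aeval_eq_sum_range, LinearMap.sum_apply]
  refine sum_mem fun i _ ↦ Submodule.smul_mem_smul ?_ Submodule.mem_top
  rw [← Ideal.Quotient.eq_zero_iff_mem, ← coeff_map, ht, coeff_zero]

lemma exists_monic_aeval_eq_zero_and_map_eq_X_pow [Module.Finite A M]
    {d : Module.End A M} (hd : LinearMap.range d ≤ I • (⊤ : Submodule A M)) :
    ∃ p : A[X], p.Monic ∧ aeval d p = 0 ∧ p.map (Ideal.Quotient.mk I) = X ^ p.natDegree := by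
  obtain ⟨p, hp, -, hcoeff, hpd⟩ :=
    LinearMap.exists_monic_and_natDegree_eq_and_coeff_mem_pow_and_aeval_eq_zero A d I hd
  refine ⟨p, hp, hpd, ?_⟩
  ext i
  rw [coeff_map, coeff_X_pow]
  split_ifs with hi
  · rw [hi, hp.coeff_natDegree, map_one]
  · rcases lt_or_gt_of_ne hi with hlt | hgt
    · exact Ideal.Quotient.eq_zero_iff_mem.mpr (Ideal.pow_le_self (by lia) (hcoeff i))
    · rw [coeff_eq_zero_of_natDegree_lt hgt, map_zero]

theorem exists_isIdempotentElem_range_sub_le [HenselianRing A I] [Module.Finite A M]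
    {e : Module.End A M} (he : LinearMap.range (e ^ 2 - e) ≤ I • (⊤ : Submodule A M)) :
    ∃ e' : Module.End A M, IsIdempotentElem e' ∧
      LinearMap.range (e' - e) ≤ I • (⊤ : Submodule A M) := by
  obtain ⟨p, hp, hpd, hpI⟩ := exists_monic_aeval_eq_zero_and_map_eq_X_pow he
  have hX : aeval e (X ^ 2 - X : A[X]) = e ^ 2 - e := by simp
  -- The extra factor `X` keeps the exponents of `X` and `X - 1` positive when `p = 1`.
  have hmonic : ((p * X).comp (X ^ 2 - X)).Monic := by
    nontriviality A
    have hdeg : (X ^ 2 - X : A[X]).natDegree = 2 := by compute_degree!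
    exact (hp.mul monic_X).comp (by monicity!) (by rw [hdeg]; norm_num)
  have hmap : ((p * X).comp (X ^ 2 - X)).map (Ideal.Quotient.mk I) =
      (X ^ 2 - X) ^ (p.natDegree + 1) := by
    simp [Polynomial.map_comp, hpI, ← pow_succ]
  obtain ⟨w, ⟨v, hv⟩, ⟨s, hs⟩⟩ :=
    exists_dvd_sq_sub_and_dvd_map_sub_X hmonic (Nat.succ_ne_zero _) hmap
  obtain ⟨s, rfl⟩ := map_surjective _ Ideal.Quotient.mk_surjective s
  refine ⟨aeval e w, ?_, ?_⟩
  · have hw : aeval e (w ^ 2 - w) = 0 := by simp [hv, aeval_comp, hX, hpd]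
    rwa [map_sub, map_pow, sub_eq_zero, pow_two] at hw
  · have ht : (w - X - (X ^ 2 - X) * s).map (Ideal.Quotient.mk I) = 0 := by
      rw [Polynomial.map_sub, hs]
      simp
    have hdecomp : aeval e w - e = (e ^ 2 - e) * aeval e s + aeval e (w - X - (X ^ 2 - X) * s) := by
      simp
    rw [hdecomp]
    exact (LinearMap.range_add_le _ _).trans
      (sup_le ((LinearMap.range_comp_le_range _ _).trans he) (range_aeval_le_smul_top ht e))

end Idempotent

section Decomposition

variable {A M : Type*} [CommRing A] [AddCommGroup M] [Module A M]

lemma exists_comp_eq_id_of_projective_baseChange {B N Q : Type*} [CommRing B] [Algebra A B]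
    (hAB : Function.Surjective (algebraMap A B)) [AddCommGroup N] [Module A N] [Module B N]
    [IsScalarTower A B N] [AddCommGroup Q] [Module A Q] [Module B Q] [IsScalarTower A B Q]
    [Module.Projective B (B ⊗[A] Q)] {π : N →ₗ[A] Q} (hπ : Function.Surjective π) :
    ∃ s : Q →ₗ[A] N, π ∘ₗ s = LinearMap.id := by
  obtain ⟨s, hs⟩ := Module.projective_lifting_property (π.extendScalarsOfSurjective hAB)
    (LinearMap.liftBaseChange B (LinearMap.id : Q →ₗ[A] Q)) hπ
  refine ⟨s.restrictScalars A ∘ₗ TensorProduct.mk A B Q 1, ?_⟩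
  ext q
  simpa using LinearMap.congr_fun hs (1 ⊗ₜ q)

lemma exists_factor_comp_eq_id {I : Ideal A} {F : Submodule A M}
    (hIF : I • (⊤ : Submodule A M) ≤ F)
    [Module.Projective (A ⧸ I) ((A ⧸ I) ⊗[A] (M ⧸ F))] :
    ∃ s : (M ⧸ F) →ₗ[A] M ⧸ I • (⊤ : Submodule A M),
      Submodule.factor hIF ∘ₗ s = LinearMap.id := by
  have htors : Module.IsTorsionBySet A (M ⧸ F) I :=
    (Module.isTorsionBySet_quotient_iff F I).mpr fun x r hr ↦
      hIF (Submodule.smul_mem_smul hr Submodule.mem_top)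
  let := htors.module
  have : IsScalarTower A (A ⧸ I) (M ⧸ F) := htors.isScalarTower
  exact exists_comp_eq_id_of_projective_baseChange (B := A ⧸ I) Ideal.Quotient.mk_surjective
    (Submodule.factor_surjective hIF)

lemma exists_comap_eq_and_range_sub_le [Module.Projective A M] {N F : Submodule A M} (hNF : N ≤ F)
    {s : (M ⧸ F) →ₗ[A] M ⧸ N} (hs : Submodule.factor hNF ∘ₗ s = LinearMap.id) :
    ∃ e : Module.End A M, N.comap e = F ∧ LinearMap.range (e ^ 2 - e) ≤ N := by
  obtain ⟨e, he⟩ := Module.projective_lifting_property N.mkQ (s ∘ₗ F.mkQ) N.mkQ_surjective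
  have hinj : Function.Injective s := Function.LeftInverse.injective (LinearMap.congr_fun hs)
  have hcomap : N.comap e = F := by
    rw [← N.ker_mkQ, ← LinearMap.ker_comp, he, LinearMap.ker_comp_of_ker_eq_bot _
      (LinearMap.ker_eq_bot.mpr hinj), F.ker_mkQ]
  have hFe : F.mkQ ∘ₗ e = F.mkQ := by
    rw [← Submodule.factor_comp_mk hNF, LinearMap.comp_assoc, he, ← LinearMap.comp_assoc, hs,
      LinearMap.id_comp, Submodule.factor_comp_mk]
  refine ⟨e, hcomap, ?_⟩
  rintro _ ⟨x, rfl⟩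
  have hx : e x - x ∈ N.comap e := by
    rw [hcomap, ← Submodule.Quotient.eq]
    exact LinearMap.congr_fun hFe x
  simpa [pow_two] using hx

lemma comap_eq_comap_of_range_sub_le {N : Submodule A M} {e e' : Module.End A M}
    (h : LinearMap.range (e' - e) ≤ N) : N.comap e' = N.comap e := by
  ext x
  have hx : e' x - e x ∈ N := h ⟨x, rfl⟩
  rw [Submodule.mem_comap, Submodule.mem_comap, ← N.add_mem_iff_right (y := e x) hx,
    sub_add_cancel]

lemma comap_smul_top_eq_ker_sup_smul_range {e : Module.End A M} (he : IsIdempotentElem e)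
    (I : Ideal A) :
    (I • (⊤ : Submodule A M)).comap e = LinearMap.ker e ⊔ I • LinearMap.range e := by
  refine le_antisymm (fun x hx ↦ ?_) (sup_le (fun x hx ↦ ?_) ?_)
  · have hker : x - e x ∈ LinearMap.ker e := by
      rw [LinearMap.mem_ker, map_sub, ← Module.End.mul_apply, he, sub_self]
    have hrange : e x ∈ I • LinearMap.range e := by
      have hex := Submodule.mem_map_of_mem (f := e) (Submodule.mem_comap.mp hx)
      rwa [← Module.End.mul_apply, he, Submodule.map_smul'', Submodule.map_top] at hex
    rw [← sub_add_cancel x (e x)]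
    exact Submodule.add_mem_sup hker hrange
  · rw [Submodule.mem_comap, LinearMap.mem_ker.mp hx]
    exact zero_mem _
  · exact (Submodule.smul_mono le_rfl le_top).trans (Submodule.smul_top_le_comap_smul_top I e)

end Decomposition

/-- **Existence of normal decompositions.** Let `(A, I)` be a henselian pair, `M` a finite
projective `A`-module and `F ⊆ M` a submodule with `I • M ⊆ F` such that the quotient
`M/F` (an `A/I`-module, here base changed to `A/I` via `(A/I) ⊗[A] (M/F)`) is a finite
projective `A/I`-module. Then there are submodules `L, T ⊆ M` with `M = L ⊕ T`
(an internal direct sum decomposition, so in particular `L` and `T` are finite projective)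
and `F = L + I • T`. -/
theorem henselian_normal_decomposition
    {A : Type*} [CommRing A] (I : Ideal A) [HenselianRing A I]
    (M : Type*) [AddCommGroup M] [Module A M]
    [Module.Finite A M] [Module.Projective A M]
    (F : Submodule A M) (hIF : I • (⊤ : Submodule A M) ≤ F)
    (hfin : Module.Finite (A ⧸ I) ((A ⧸ I) ⊗[A] (M ⧸ F)))
    (hproj : Module.Projective (A ⧸ I) ((A ⧸ I) ⊗[A] (M ⧸ F))) :
    ∃ L T : Submodule A M, IsCompl L T ∧ F = L ⊔ I • T := by
  obtain ⟨s, hs⟩ := exists_factor_comp_eq_id hIF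
  obtain ⟨e, heF, he⟩ := exists_comap_eq_and_range_sub_le hIF hs
  obtain ⟨e', he', hee'⟩ := exists_isIdempotentElem_range_sub_le he
  refine ⟨LinearMap.ker e', LinearMap.range e', (LinearMap.IsIdempotentElem.isCompl he').symm, ?_⟩
  calc F
    _ = (I • ⊤ : Submodule A M).comap e := heF.symm
    _ = (I • ⊤ : Submodule A M).comap e' := (comap_eq_comap_of_range_sub_le hee').symm
    _ = LinearMap.ker e' ⊔ I • LinearMap.range e' := comap_smul_top_eq_ker_sup_smul_range he' I
end
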